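/- Let x_1,…,x_n (robots) and y_1,…,y_n (targets) be 2n mutually independent uniformly distributed random points in the unit square Q = [0,1]² ⊂ ℝ². Fix radii r_comm > 0 and r_sense > 0 and a real ε with 0 < ε < 1. Set θ := min{ √5 · r_sense, √2 · r_comm } and b := ⌈√10 / θ⌉. If n ≥ b² · log( b² / ε ), then with probability at least 1 − ε the following two events hold simultaneously: (i) the geometric graph on x_1,…,x_n with radius r_comm (edge between distinct i, j iff ‖x_i − x_j‖₂ ≤ r_comm) is connected, and (ii) for every j ∈ {1,…,n} there exists i ∈ {1,…,n} with ‖y_j − x_i‖₂ ≤ r_sense. -/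

import Mathlib

open MeasureTheory

/-- The closed unit square `[0,1]² ⊂ ℝ²` (with the Euclidean norm). -/
def unitSquare : Set (EuclideanSpace ℝ (Fin 2)) :=
  {p | ∀ i, p i ∈ Set.Icc (0 : ℝ) 1}

/-- The uniform probability measure on the unit square. -/
noncomputable def unifSquare : Measure (EuclideanSpace ℝ (Fin 2)) :=
  volume.restrict unitSquare

/-- The geometric graph on the points `x 0, …, x (n-1)` with radius `r`: vertices `Fin n`,
with an edge between distinct `i` and `j` iff `‖x i − x j‖₂ ≤ r`. -/
def geomGraph {n : ℕ} (x : Fin n → EuclideanSpace ℝ (Fin 2)) (r : ℝ) : SimpleGraph (Fin n) :=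
  SimpleGraph.fromRel fun i j => ‖x i - x j‖ ≤ r


def gcell (b s t : ℕ) : Set (EuclideanSpace ℝ (Fin 2)) :=
  {p | p 0 ∈ Set.Icc ((s : ℝ) / b) ((s + 1 : ℝ) / b) ∧ p 1 ∈ Set.Icc ((t : ℝ) / b) ((t + 1 : ℝ) / b)}

lemma box_eq (u v w z : ℝ) :
    {p : EuclideanSpace ℝ (Fin 2) | p 0 ∈ Set.Icc u v ∧ p 1 ∈ Set.Icc w z} =
      (WithLp.ofLp : EuclideanSpace ℝ (Fin 2) → (Fin 2 → ℝ)) ⁻¹'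
        (Set.univ.pi ![Set.Icc u v, Set.Icc w z]) := by
  ext p
  simp [Set.mem_pi, Fin.forall_fin_two]

lemma pi_meas (u v w z : ℝ) :
    MeasurableSet (Set.univ.pi ![Set.Icc u v, Set.Icc w z]) := by
  apply MeasurableSet.univ_pi
  intro i
  fin_cases i <;> exact measurableSet_Icc

lemma box_meas (u v w z : ℝ) :
    MeasurableSet {p : EuclideanSpace ℝ (Fin 2) | p 0 ∈ Set.Icc u v ∧ p 1 ∈ Set.Icc w z} := by
  rw [box_eq]
  exact (EuclideanSpace.volume_preserving_symm_measurableEquiv_toLp (Fin 2)).measurable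
    (pi_meas u v w z)

lemma box_vol (u v w z : ℝ) :
    volume {p : EuclideanSpace ℝ (Fin 2) | p 0 ∈ Set.Icc u v ∧ p 1 ∈ Set.Icc w z} =
      ENNReal.ofReal (v - u) * ENNReal.ofReal (z - w) := by
  rw [box_eq]
  refine ((EuclideanSpace.volume_preserving_symm_measurableEquiv_toLp
    (Fin 2)).measure_preimage (pi_meas u v w z).nullMeasurableSet).trans ?_
  rw [volume_pi_pi]
  simp [Fin.prod_univ_two]

lemma usq_eq : unitSquare =
    {p : EuclideanSpace ℝ (Fin 2) | p 0 ∈ Set.Icc (0:ℝ) 1 ∧ p 1 ∈ Set.Icc (0:ℝ) 1} := by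
  ext p
  simp only [unitSquare, Set.mem_ofPred_eq, Fin.forall_fin_two]

lemma usq_meas : MeasurableSet unitSquare := by
  rw [usq_eq]; exact box_meas _ _ _ _

lemma usq_vol : volume unitSquare = 1 := by
  rw [usq_eq, box_vol]; simp

instance unif_prob : IsProbabilityMeasure unifSquare :=
  ⟨by simp [unifSquare, usq_vol]⟩

lemma unif_usq : unifSquare unitSquare = 1 := by
  simp [unifSquare, usq_vol]

lemma gcell_meas (b s t : ℕ) : MeasurableSet (gcell b s t) := box_meas _ _ _ _

lemma gcell_sub {b s t : ℕ} (hs : s < b) (ht : t < b) : gcell b s t ⊆ unitSquare := by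
  intro p hp
  have hb : (0 : ℝ) < b := by exact_mod_cast (by omega : 0 < b)
  have hs' : (s + 1 : ℝ) ≤ b := by exact_mod_cast hs
  have ht' : (t + 1 : ℝ) ≤ b := by exact_mod_cast ht
  have h0 : (0 : ℝ) ≤ s / b := by positivity
  have h1 : (0 : ℝ) ≤ t / b := by positivity
  have h2 : (s + 1 : ℝ) / b ≤ 1 := (div_le_one hb).2 hs'
  have h3 : (t + 1 : ℝ) / b ≤ 1 := (div_le_one hb).2 ht'
  obtain ⟨⟨a1, a2⟩, a3, a4⟩ := hp
  rw [usq_eq]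
  exact ⟨⟨by linarith, by linarith⟩, by linarith, by linarith⟩

lemma unif_gcell_compl {b s t : ℕ} (hs : s < b) (ht : t < b) :
    unifSquare (gcell b s t)ᶜ = ENNReal.ofReal (1 - 1 / (b : ℝ) ^ 2) := by
  have hb : (0 : ℝ) < b := by exact_mod_cast (by omega : 0 < b)
  rw [prob_compl_eq_one_sub (gcell_meas b s t), unifSquare,
    Measure.restrict_apply (gcell_meas b s t), Set.inter_eq_left.2 (gcell_sub hs ht), gcell, box_vol,
    ← ENNReal.ofReal_mul, ← ENNReal.ofReal_one, ← ENNReal.ofReal_sub]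
  · congr 2
    field_simp
    ring
  · apply mul_nonneg <;> (rw [← sub_div]; simp)
  · rw [← sub_div]; simp

lemma exists_idx {b : ℕ} (hb : 0 < b) {u : ℝ} (hu : u ∈ Set.Icc (0:ℝ) 1) :
    ∃ s < b, u ∈ Set.Icc ((s : ℝ) / b) ((s + 1 : ℝ) / b) := by
  have hb' : (0 : ℝ) < b := by exact_mod_cast hb
  rcases lt_or_eq_of_le hu.2 with h | h
  · refine ⟨⌊u * b⌋₊, ?_, ?_, ?_⟩
    · rw [Nat.floor_lt (by have := hu.1; positivity)]
      nlinarith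
    · rw [div_le_iff₀ hb']
      exact Nat.floor_le (by have := hu.1; positivity)
    · rw [le_div_iff₀ hb']
      exact (Nat.lt_floor_add_one _).le
  · refine ⟨b - 1, by omega, ?_⟩
    rw [Nat.cast_sub hb, h]
    constructor
    · rw [div_le_one hb']; simp
    · simp [hb'.ne']

lemma exists_gcell {b : ℕ} (hb : 0 < b) {p} (hp : p ∈ unitSquare) :
    ∃ s < b, ∃ t < b, p ∈ gcell b s t := by
  rw [usq_eq] at hp
  obtain ⟨s, hs, h1⟩ := exists_idx hb hp.1
  obtain ⟨t, ht, h2⟩ := exists_idx hb hp.2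
  exact ⟨s, hs, t, ht, h1, h2⟩

lemma norm_bd (p q : EuclideanSpace ℝ (Fin 2)) (u v r : ℝ) (hr : 0 ≤ r)
    (h0 : |p 0 - q 0| ≤ u) (h1 : |p 1 - q 1| ≤ v) (h : u ^ 2 + v ^ 2 ≤ r ^ 2) : ‖p - q‖ ≤ r := by
  rw [EuclideanSpace.norm_eq]
  apply Real.sqrt_le_iff.2 ⟨hr, ?_⟩
  simp only [Fin.sum_univ_two, PiLp.sub_apply, Real.norm_eq_abs]
  have := pow_le_pow_left₀ (abs_nonneg _) h0 2
  have := pow_le_pow_left₀ (abs_nonneg _) h1 2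
  linarith

lemma dist_same {b s t : ℕ} {p q} (hp : p ∈ gcell b s t) (hq : q ∈ gcell b s t) {r : ℝ}
    (hr : 0 ≤ r) (h : 2 * (1 / (b : ℝ)) ^ 2 ≤ r ^ 2) : ‖p - q‖ ≤ r := by
  obtain ⟨⟨a1, a2⟩, a3, a4⟩ := hp
  obtain ⟨⟨b1, b2⟩, b3, b4⟩ := hq
  simp only [add_div] at *
  refine norm_bd p q (1 / b) (1 / b) r hr ?_ ?_ (by linarith) <;>
  · rw [abs_le]; constructor <;> linarith

lemma dist_right {b s t : ℕ} {p q} (hp : p ∈ gcell b s t) (hq : q ∈ gcell b (s + 1) t) {r : ℝ}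
    (hr : 0 ≤ r) (h : 5 * (1 / (b : ℝ)) ^ 2 ≤ r ^ 2) : ‖p - q‖ ≤ r := by
  obtain ⟨⟨a1, a2⟩, a3, a4⟩ := hp
  obtain ⟨⟨b1, b2⟩, b3, b4⟩ := hq
  push_cast at *
  simp only [add_div] at *
  have : (0 : ℝ) ≤ 1 / b := by positivity
  refine norm_bd p q (2 * (1 / b)) (1 / b) r hr ?_ ?_ (by nlinarith) <;>
  · rw [abs_le]; constructor <;> linarith

lemma dist_up {b s t : ℕ} {p q} (hp : p ∈ gcell b s t) (hq : q ∈ gcell b s (t + 1)) {r : ℝ}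
    (hr : 0 ≤ r) (h : 5 * (1 / (b : ℝ)) ^ 2 ≤ r ^ 2) : ‖p - q‖ ≤ r := by
  obtain ⟨⟨a1, a2⟩, a3, a4⟩ := hp
  obtain ⟨⟨b1, b2⟩, b3, b4⟩ := hq
  push_cast at *
  simp only [add_div] at *
  have : (0 : ℝ) ≤ 1 / b := by positivity
  refine norm_bd p q (1 / b) (2 * (1 / b)) r hr ?_ ?_ (by nlinarith) <;>
  · rw [abs_le]; constructor <;> linarith

lemma reach_of {n : ℕ} {x : Fin n → EuclideanSpace ℝ (Fin 2)} {r : ℝ} {i j : Fin n}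
    (h : ‖x i - x j‖ ≤ r) : (geomGraph x r).Reachable i j := by
  by_cases hij : i = j
  · subst hij; exact SimpleGraph.Reachable.refl _
  · apply SimpleGraph.Adj.reachable
    rw [geomGraph, SimpleGraph.fromRel_adj]
    exact ⟨hij, Or.inl h⟩

lemma conn_of {n b : ℕ} (hb : 0 < b) {x : Fin n → EuclideanSpace ℝ (Fin 2)} {r : ℝ}
    (hr : 0 ≤ r) (h : 5 * (1 / (b : ℝ)) ^ 2 ≤ r ^ 2) (hU : ∀ i, x i ∈ unitSquare)
    (hC : ∀ s < b, ∀ t < b, ∃ i, x i ∈ gcell b s t) : (geomGraph x r).Connected := by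
  obtain ⟨o, ho⟩ := hC 0 hb 0 hb
  have h2 : 2 * (1 / (b : ℝ)) ^ 2 ≤ r ^ 2 := by
    have : (0 : ℝ) ≤ (1 / (b : ℝ)) ^ 2 := by positivity
    linarith
  have row : ∀ s, s < b → ∀ i, x i ∈ gcell b s 0 → (geomGraph x r).Reachable i o := by
    intro s
    induction s with
    | zero => intro _ i hi; exact reach_of (dist_same hi ho hr h2)
    | succ s ih =>
      intro hs i hi
      obtain ⟨j, hj⟩ := hC s (by omega) 0 hb
      exact (reach_of (dist_right hj hi hr h)).symm.trans (ih (by omega) j hj)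
  have all : ∀ s, s < b → ∀ t, t < b → ∀ i, x i ∈ gcell b s t →
      (geomGraph x r).Reachable i o := by
    intro s hs t
    induction t with
    | zero => intro _ i hi; exact row s hs i hi
    | succ t ih =>
      intro ht i hi
      obtain ⟨j, hj⟩ := hC s hs t (by omega)
      exact (reach_of (dist_up hj hi hr h)).symm.trans (ih (by omega) j hj)
  have all' : ∀ i, (geomGraph x r).Reachable i o := by
    intro i
    obtain ⟨s, hs, t, ht, hi⟩ := exists_gcell hb (hU i)
    exact all s hs t ht i hi
  have : Nonempty (Fin n) := ⟨o⟩
  exact ⟨fun i j => (all' i).trans (all' j).symm⟩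

lemma num_bd {b n : ℕ} (hb : 0 < b) {ε : ℝ} (hε : 0 < ε)
    (hn : (b : ℝ) ^ 2 * Real.log ((b : ℝ) ^ 2 / ε) ≤ n) :
    (b : ℝ) ^ 2 * (1 - 1 / (b : ℝ) ^ 2) ^ n ≤ ε := by
  have hb1 : (1 : ℝ) ≤ b := by exact_mod_cast hb
  have hB : (0 : ℝ) < (b : ℝ) ^ 2 := by positivity
  have h0 : 0 ≤ 1 - 1 / (b : ℝ) ^ 2 := by
    rw [sub_nonneg, div_le_one hB]; nlinarith
  have h1 : 1 - 1 / (b : ℝ) ^ 2 ≤ Real.exp (-(1 / (b : ℝ) ^ 2)) := by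
    have := Real.add_one_le_exp (-(1 / (b : ℝ) ^ 2)); linarith
  have h2 : Real.log ((b : ℝ) ^ 2 / ε) ≤ n / (b : ℝ) ^ 2 := by
    rw [le_div_iff₀ hB]; linarith
  have h3 : (1 - 1 / (b : ℝ) ^ 2) ^ n ≤ ε / (b : ℝ) ^ 2 := by
    calc _ ≤ Real.exp (-(1 / (b : ℝ) ^ 2)) ^ n := pow_le_pow_left₀ h0 h1 n
      _ = Real.exp (-(n / (b : ℝ) ^ 2)) := by rw [← Real.exp_nat_mul]; congr 1; ring
      _ ≤ Real.exp (-Real.log ((b : ℝ) ^ 2 / ε)) := by gcongr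
      _ = _ := by rw [Real.exp_neg, Real.exp_log (by positivity), inv_div]
  calc _ ≤ (b : ℝ) ^ 2 * (ε / (b : ℝ) ^ 2) := by gcongr
    _ = ε := by field_simp

lemma main_aux {b n : ℕ} (hb : 0 < b) {ε rc rs : ℝ} (hε : 0 < ε) (hrc : 0 < rc) (hrs : 0 < rs)
    (hn : (b : ℝ) ^ 2 * Real.log ((b : ℝ) ^ 2 / ε) ≤ n)
    (h5 : 5 * (1 / (b : ℝ)) ^ 2 ≤ rc ^ 2) (h2 : 2 * (1 / (b : ℝ)) ^ 2 ≤ rs ^ 2) :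
    ENNReal.ofReal (1 - ε) ≤
      ((Measure.pi fun _ : Fin n => unifSquare).prod (Measure.pi fun _ : Fin n => unifSquare))
        {ω : (Fin n → EuclideanSpace ℝ (Fin 2)) × (Fin n → EuclideanSpace ℝ (Fin 2)) |
          (geomGraph ω.1 rc).Connected ∧
          ∀ j : Fin n, ∃ i : Fin n, ‖ω.2 j - ω.1 i‖ ≤ rs} := by
  set μ := Measure.pi fun _ : Fin n => unifSquare with hμ
  set U : Set (Fin n → EuclideanSpace ℝ (Fin 2)) := Set.univ.pi fun _ => unitSquare with hU
  set B : Fin b × Fin b → Set (Fin n → EuclideanSpace ℝ (Fin 2)) :=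
    fun a => Set.univ.pi fun _ => (gcell b a.1 a.2)ᶜ with hB
  have hsub : (U \ ⋃ a, B a) ×ˢ U ⊆
      {ω : (Fin n → EuclideanSpace ℝ (Fin 2)) × (Fin n → EuclideanSpace ℝ (Fin 2)) |
          (geomGraph ω.1 rc).Connected ∧
          ∀ j : Fin n, ∃ i : Fin n, ‖ω.2 j - ω.1 i‖ ≤ rs} := by
    rintro ⟨x, y⟩ ⟨⟨hx, hxB⟩, hy⟩
    have hC : ∀ s < b, ∀ t < b, ∃ i, x i ∈ gcell b s t := by
      intro s hs t ht
      by_contra hcon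
      push Not at hcon
      exact hxB (Set.mem_iUnion.2 ⟨(⟨s, hs⟩, ⟨t, ht⟩), fun i _ => hcon i⟩)
    refine ⟨conn_of hb hrc.le h5 (fun i => hx i trivial) hC, fun j => ?_⟩
    obtain ⟨s, hs, t, ht, hj⟩ := exists_gcell hb (hy j trivial)
    obtain ⟨i, hi⟩ := hC s hs t ht
    exact ⟨i, dist_same hj hi hrs.le h2⟩
  refine le_trans ?_ (measure_mono hsub)
  have hU1 : μ U = 1 := by
    rw [hμ, hU, Measure.pi_pi]; simp [unif_usq]
  have hB1 : ∀ a, μ (B a) = ENNReal.ofReal ((1 - 1 / (b : ℝ) ^ 2) ^ n) := by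
    intro a
    rw [hμ, hB]
    simp only [Measure.pi_pi]
    rw [unif_gcell_compl a.1.2 a.2.2, ENNReal.ofReal_pow]
    · simp
    · have hb1 : (1 : ℝ) ≤ b := by exact_mod_cast hb
      rw [sub_nonneg, div_le_one (by positivity)]; nlinarith
  have hun : μ (⋃ a, B a) ≤ ENNReal.ofReal ε := by
    calc μ (⋃ a, B a) ≤ ∑ a, μ (B a) := measure_iUnion_fintype_le _ _
      _ = ENNReal.ofReal ((b : ℝ) ^ 2 * (1 - 1 / (b : ℝ) ^ 2) ^ n) := by
        simp only [hB1]
        rw [ENNReal.ofReal_mul (by positivity)]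
        simp [ENNReal.ofReal_pow, pow_two, ENNReal.ofReal_mul]
      _ ≤ _ := ENNReal.ofReal_le_ofReal (num_bd hb hε hn)
  rw [Measure.prod_prod, hU1, mul_one, ENNReal.ofReal_sub _ hε.le, ENNReal.ofReal_one]
  calc 1 - ENNReal.ofReal ε ≤ μ U - μ (⋃ a, B a) := by rw [hU1]; gcongr
    _ ≤ _ := le_measure_sdiff

/-- let `x₁,…,x_n` (robots) and `y₁,…,y_n` (targets) be `2n` mutually
independent uniform points in the unit square (modeled by the product measure on pairs of
configurations `ω = (x, y)`).  Fix `r_comm, r_sense > 0` and `0 < ε < 1`, and set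
`θ = min(√5·r_sense, √2·r_comm)` and `b = ⌈√10/θ⌉`.  If `n ≥ b²·log(b²/ε)` then with
probability at least `1 − ε`, simultaneously (i) the communication graph (radius `r_comm`) of
the robots is connected and (ii) every target is within distance `r_sense` of some robot. -/
theorem stmt_14 (rcomm rsense ε : ℝ) (hrc : 0 < rcomm) (hrs : 0 < rsense)
    (hε0 : 0 < ε) (hε1 : ε < 1) (n : ℕ)
    (hn : (⌈Real.sqrt 10 / min (Real.sqrt 5 * rsense) (Real.sqrt 2 * rcomm)⌉₊ : ℝ) ^ 2 *
        Real.log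
          ((⌈Real.sqrt 10 / min (Real.sqrt 5 * rsense) (Real.sqrt 2 * rcomm)⌉₊ : ℝ) ^ 2 / ε)
      ≤ (n : ℝ)) :
    ENNReal.ofReal (1 - ε) ≤
      ((Measure.pi fun _ : Fin n => unifSquare).prod (Measure.pi fun _ : Fin n => unifSquare))
        {ω : (Fin n → EuclideanSpace ℝ (Fin 2)) × (Fin n → EuclideanSpace ℝ (Fin 2)) |
          (geomGraph ω.1 rcomm).Connected ∧
          ∀ j : Fin n, ∃ i : Fin n, ‖ω.2 j - ω.1 i‖ ≤ rsense} := by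
  set θ := min (Real.sqrt 5 * rsense) (Real.sqrt 2 * rcomm) with hθ
  have hθ0 : 0 < θ := lt_min (by positivity) (by positivity)
  set b := ⌈Real.sqrt 10 / θ⌉₊ with hb
  have hb0 : 0 < b := Nat.ceil_pos.2 (by positivity)
  have hbR : (0 : ℝ) < b := by exact_mod_cast hb0
  have hle : Real.sqrt 10 / θ ≤ b := Nat.le_ceil _
  rw [div_le_iff₀ hθ0] at hle
  have key : ∀ c : ℝ, Real.sqrt 10 ≤ b * c → 10 * (1 / (b : ℝ)) ^ 2 ≤ c ^ 2 := by
    intro c hc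
    have h := pow_le_pow_left₀ (Real.sqrt_nonneg 10) hc 2
    rw [Real.sq_sqrt (by norm_num)] at h
    rw [div_pow, one_pow, mul_one_div, div_le_iff₀ (by positivity)]
    linarith
  have k1 := key _ (hle.trans (mul_le_mul_of_nonneg_left (min_le_left _ _) hbR.le))
  have k2 := key _ (hle.trans (mul_le_mul_of_nonneg_left (min_le_right _ _) hbR.le))
  rw [mul_pow, Real.sq_sqrt (by norm_num)] at k1 k2
  exact main_aux hb0 hε0 hrc hrs hn (by linarith) (by linarith)
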